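/- arXiv:2408.10480 — 2 statements merged into one kernel-verified Lean document; each statement's English description precedes it below -/
import Mathlib

section
/- Assume (A1)–(A2). Then the map s ↦ c*(s) is continuous on [0,∞). -/
open Filter Asymptotics MeasureTheory Set

noncomputable section

/-- A traveling wave front with speed `c` for the nonlinearity `g`. -/
def IsFront (g : ℝ → ℝ) (c : ℝ) (W : ℝ → ℝ) : Prop :=
  ContDiff ℝ 2 W ∧
  (∀ ξ, deriv (deriv W) ξ + c * deriv W ξ + g (W ξ) = 0) ∧
  Tendsto W atBot (nhds 1) ∧ Tendsto W atTop (nhds 0) ∧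
  (∀ ξ, deriv W ξ < 0)

/-! Along a front the squared slope `y = W'²`, seen as a function of the height `w = W`, solves
`y' = 2c√y - 2g` with `y(1) = 0`. For `c ≥ 0` the right-hand side is monotone in `y`, so this
problem is well posed backwards from `w = 1`, even though `√` is not Lipschitz. If `V` is a front
of `g₂ ≥ g` with speed `c`, comparison gives `y(V) ≤ V'²`, and the time change that slows `V` down
to slope `-√y(V)` turns it into a front of `g` with the same speed. Rescaling space by `k` turns a
front of `g` with speed `c` into a front of `k² g` with speed `k c`; hence `g ≤ k² h` implies
`c*(g) ≤ k c*(h)`. Finally, `C¹`-closeness makes `f(·; s)` and `f(·; s₀)` close up to a factor near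
`1`, because `f(·; s₀)` has simple zeros at the endpoints.
-/

open scoped NNReal Topology

/-! ### One-sided comparison -/

lemma le_add_mul_of_hasDerivAt_le_of_lt {d d' : ℝ → ℝ} {a b M δ : ℝ} (hab : a ≤ b) (hδ : 0 ≤ δ)
    (hd : ContinuousOn d (Icc a b)) (hd' : ∀ x ∈ Ioo a b, HasDerivAt d (d' x) x)
    (ha : d a ≤ M) (hle : ∀ x ∈ Ioo a b, M < d x → d' x ≤ δ) : d b ≤ M + δ * (b - a) := by
  have hcompact : IsCompact (Icc a b ∩ d ⁻¹' Iic M) :=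
    isCompact_Icc.of_isClosed_subset
      (hd.preimage_isClosed_of_isClosed isClosed_Icc isClosed_Iic) inter_subset_left
  obtain ⟨p, ⟨⟨hap, hpb⟩, hpM⟩, hp_last⟩ :=
    hcompact.exists_isGreatest ⟨a, left_mem_Icc.2 hab, ha⟩
  have above : ∀ x ∈ Ioo p b, M < d x := fun x hx => by
    by_contra! hxM
    exact hx.1.not_ge (hp_last ⟨⟨hap.trans hx.1.le, hx.2.le⟩, hxM⟩)
  have hderiv : ∀ x ∈ Ioo p b, HasDerivAt d (d' x) x := fun x hx => hd' x ⟨hap.trans_lt hx.1, hx.2⟩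
  have growth : d b - d p ≤ δ * (b - p) := by
    refine (convex_Icc p b).image_sub_le_mul_sub_of_deriv_le (hd.mono (Icc_subset_Icc_left hap))
      ?_ ?_ p (left_mem_Icc.2 hpb) b (right_mem_Icc.2 hpb) hpb <;> rw [interior_Icc]
    · exact fun x hx => (hderiv x hx).differentiableAt.differentiableWithinAt
    · intro x hx
      rw [(hderiv x hx).deriv]
      exact hle x ⟨hap.trans_lt hx.1, hx.2⟩ (above x hx)
  have hlen : δ * (b - p) ≤ δ * (b - a) := by gcongr
  have hp : d p ≤ M := hpM
  linarith

lemma le_add_mul_of_le_hasDerivAt_of_lt {d d' : ℝ → ℝ} {a b M δ : ℝ} (hab : a ≤ b) (hδ : 0 ≤ δ)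
    (hd : ContinuousOn d (Icc a b)) (hd' : ∀ x ∈ Ioo a b, HasDerivAt d (d' x) x)
    (hb : d b ≤ M) (hle : ∀ x ∈ Ioo a b, M < d x → -δ ≤ d' x) : d a ≤ M + δ * (b - a) := by
  have reflect_Ioo : ∀ t ∈ Ioo (-b) (-a), -t ∈ Ioo a b := fun t ht =>
    ⟨lt_neg_of_lt_neg ht.2, neg_lt_of_neg_lt ht.1⟩
  have := le_add_mul_of_hasDerivAt_le_of_lt (d := fun t => d (-t)) (d' := fun t => -d' (-t))
    (neg_le_neg hab) hδ
    (hd.comp continuousOn_neg fun t ht => ⟨le_neg_of_le_neg ht.2, neg_le_of_neg_le ht.1⟩)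
    (fun t ht => ((hd' (-t) (reflect_Ioo t ht)).comp t (hasDerivAt_neg t)).congr_deriv
      (mul_neg_one _))
    (by simpa using hb)
    (fun t ht hM => neg_le_of_neg_le (hle (-t) (reflect_Ioo t ht) hM))
  simpa [neg_add_eq_sub] using this

/-! ### Terminal value problems with a monotone right-hand side -/

/-- `y` solves `y' = φ(y) + h` on `(a, b)`, is continuous on `[a, b]` and vanishes at the right
endpoint. For monotone `φ` the problem is well posed in this backward direction. -/
structure IsTerminalSolution (φ h : ℝ → ℝ) (a b : ℝ) (y : ℝ → ℝ) : Prop where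
  continuousOn : ContinuousOn y (Icc a b)
  terminal : y b = 0
  hasDerivAt : ∀ x ∈ Ioo a b, HasDerivAt y (φ (y x) + h x) x

namespace IsTerminalSolution

variable {φ h : ℝ → ℝ} {a b : ℝ}

lemma sub_le_mul {ψ u v : ℝ → ℝ} {δ x : ℝ} (hu : IsTerminalSolution φ h a b u)
    (hv : IsTerminalSolution ψ h a b v) (hφ : Monotone φ) (hδ : 0 ≤ δ)
    (hle : ∀ r, ψ r ≤ φ r + δ) (hx : x ∈ Icc a b) : u x - v x ≤ δ * (b - a) := by
  have hIoo : Ioo x b ⊆ Ioo a b := Ioo_subset_Ioo_left hx.1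
  have := le_add_mul_of_le_hasDerivAt_of_lt (d := fun t => u t - v t) (M := 0) hx.2 hδ
    ((hu.continuousOn.sub hv.continuousOn).mono (Icc_subset_Icc_left hx.1))
    (fun t ht => (hu.hasDerivAt t (hIoo ht)).sub (hv.hasDerivAt t (hIoo ht)))
    (by simp [hu.terminal, hv.terminal])
    (fun t _ hlt => by linarith [hφ (sub_pos.1 hlt).le, hle (v t)])
  calc u x - v x ≤ δ * (b - x) := by simpa using this
    _ ≤ δ * (b - a) := by gcongr; exact hx.1

lemma exists_of_lipschitzWith {K M : ℝ≥0} (hab : a ≤ b) (hφ : LipschitzWith K φ)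
    (hh : ContinuousOn h (Icc a b))
    (hM : ∀ r, |r| ≤ M * (b - a) → ∀ t ∈ Icc a b, |φ r + h t| ≤ M) :
    ∃ y, IsTerminalSolution φ h a b y := by
  have hradius : ((M * (b - a).toNNReal : ℝ≥0) : ℝ) = M * (b - a) := by
    rw [NNReal.coe_mul, Real.coe_toNNReal _ (sub_nonneg.2 hab)]
  have hPicard : IsPicardLindelof (fun t r => φ r + h t) (⟨b, right_mem_Icc.2 hab⟩ : Icc a b) 0
      (M * (b - a).toNNReal) 0 M K :=
    { lipschitzOnWith := fun t _ =>
        (LipschitzWith.of_dist_le_mul fun r s => by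
          simpa using hφ.dist_le_mul r s).lipschitzOnWith
      continuousOn := fun r _ => continuousOn_const.add hh
      norm_le := fun t ht r hr => hM r (by simpa [hradius] using hr) t ht
      mul_max_le := by simp [hradius, hab] }
  obtain ⟨y, hyb, hy⟩ := hPicard.exists_eq_forall_mem_Icc_hasDerivWithinAt₀
  exact ⟨y, fun x hx => (hy x hx).continuousWithinAt, hyb,
    fun x hx => (hy x (Ioo_subset_Icc_self hx)).hasDerivAt (Icc_mem_nhds hx.1 hx.2)⟩

lemma uniformCauchySeqOn {Φ Y : ℕ → ℝ → ℝ} (hab : a ≤ b) (hmono : ∀ n, Monotone (Φ n))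
    (hΦ : TendstoUniformly Φ φ atTop) (hY : ∀ n, IsTerminalSolution (Φ n) h a b (Y n)) :
    UniformCauchySeqOn Y atTop (Icc a b) := by
  rw [Metric.uniformCauchySeqOn_iff]
  intro ε hε
  have hlen : 0 < b - a + 1 := by linarith
  have hδ : 0 < ε / (b - a + 1) := div_pos hε hlen
  obtain ⟨N, hN⟩ := Metric.uniformCauchySeqOn_iff.1
    (tendstoUniformlyOn_univ.2 hΦ).uniformCauchySeqOn _ hδ
  have hclose : ∀ m ≥ N, ∀ n ≥ N, ∀ r, Φ n r ≤ Φ m r + ε / (b - a + 1) := fun m hm n hn r => by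
    have := (abs_lt.1 (hN n hn m hm r (mem_univ r))).2
    linarith
  have hsub : ∀ m ≥ N, ∀ n ≥ N, ∀ x ∈ Icc a b, Y m x - Y n x < ε := fun m hm n hn x hx =>
    calc Y m x - Y n x ≤ ε / (b - a + 1) * (b - a) :=
          (hY m).sub_le_mul (hY n) (hmono m) hδ.le (hclose m hm n hn) hx
      _ < ε / (b - a + 1) * (b - a + 1) := by gcongr; linarith
      _ = ε := div_mul_cancel₀ _ hlen.ne'
  refine ⟨N, fun m hm n hn x hx => abs_lt.2 ⟨?_, hsub m hm n hn x hx⟩⟩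
  linarith [hsub n hn m hm x hx]

lemma exists_of_tendstoUniformly {Φ Y : ℕ → ℝ → ℝ} (hab : a ≤ b) (hmono : ∀ n, Monotone (Φ n))
    (hφ : UniformContinuous φ) (hΦ : TendstoUniformly Φ φ atTop)
    (hY : ∀ n, IsTerminalSolution (Φ n) h a b (Y n)) : ∃ y, IsTerminalSolution φ h a b y := by
  have hCauchy := uniformCauchySeqOn hab hmono hΦ hY
  set y : ℝ → ℝ := fun x => limUnder atTop fun n => Y n x
  have hpointwise : ∀ x ∈ Icc a b, Tendsto (fun n => Y n x) atTop (𝓝 (y x)) := fun x hx =>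
    (hCauchy.cauchySeq hx).tendsto_limUnder
  have hunif : TendstoUniformlyOn Y y atTop (Icc a b) :=
    hCauchy.tendstoUniformlyOn_of_tendsto hpointwise
  have hderiv : TendstoUniformlyOn (fun n x => Φ n (Y n x) + h x) (fun x => φ (y x) + h x) atTop
      (Ioo a b) := by
    rw [Metric.tendstoUniformlyOn_iff]
    intro ε hε
    filter_upwards [Metric.tendstoUniformly_iff.1 hΦ _ (half_pos hε),
      Metric.tendstoUniformlyOn_iff.1 (hφ.comp_tendstoUniformlyOn hunif) _ (half_pos hε)]
      with n hΦn hYn x hx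
    rw [dist_add_right]
    calc dist (φ (y x)) (Φ n (Y n x))
        ≤ dist (φ (y x)) (φ (Y n x)) + dist (φ (Y n x)) (Φ n (Y n x)) := dist_triangle ..
      _ < ε / 2 + ε / 2 := add_lt_add (hYn x (Ioo_subset_Icc_self hx)) (hΦn _)
      _ = ε := add_halves ε
  refine ⟨y, hunif.continuousOn (.of_forall fun n => (hY n).continuousOn), ?_, fun x hx => ?_⟩
  · have := hpointwise b (right_mem_Icc.2 hab)
    simp only [(hY _).terminal] at this
    exact tendsto_nhds_unique this tendsto_const_nhds
  · exact hasDerivAt_of_tendstoUniformlyOn isOpen_Ioo hderiv (.of_forall fun n => (hY n).hasDerivAt)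
      (fun x hx => hpointwise x (Ioo_subset_Icc_self hx)) hx

end IsTerminalSolution

/-! ### Time change -/

lemma exists_orderIso_hasDerivAt_inv {ρ : ℝ → ℝ} {m : ℝ} (hρ : Continuous ρ) (hm : 0 < m)
    (hmρ : ∀ x, m ≤ ρ x) : ∃ S : ℝ ≃o ℝ, ∀ t, HasDerivAt S (ρ (S t))⁻¹ t := by
  let T : ℝ → ℝ := fun x => ∫ t in (0)..x, ρ t
  have hT : ∀ x, HasDerivAt T (ρ x) x := fun x => (hρ.integral_hasStrictDerivAt 0 x).hasDerivAt
  have hpos : ∀ x, 0 < ρ x := fun x => hm.trans_le (hmρ x)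
  have hgrowth : Monotone fun x => T x - m * x :=
    monotone_of_hasDerivAt_nonneg
      (fun x => (hT x).sub ((hasDerivAt_id x).const_mul m)) fun x => by simpa using hmρ x
  have hT₀ : T 0 = 0 := intervalIntegral.integral_same
  have htop : Tendsto T atTop atTop := by
    refine tendsto_atTop_mono' atTop ?_ (tendsto_id.const_mul_atTop hm)
    filter_upwards [eventually_ge_atTop 0] with x hx
    simpa [hT₀] using hgrowth hx
  have hbot : Tendsto T atBot atBot := by
    refine tendsto_atBot_mono' atBot ?_ (tendsto_id.const_mul_atBot hm)
    filter_upwards [eventually_le_atBot 0] with x hx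
    simpa [hT₀] using hgrowth hx
  have hmono : StrictMono T := strictMono_of_hasDerivAt_pos hT hpos
  have hcont : Continuous T := continuous_iff_continuousAt.2 fun x => (hT x).continuousAt
  let E : ℝ ≃o ℝ := hmono.orderIsoOfSurjective T (hcont.surjective htop hbot)
  exact ⟨E.symm, fun t => (hT _).of_local_left_inverse E.symm.continuous.continuousAt (hpos _).ne'
    (.of_forall E.apply_symm_apply)⟩

/-! ### The phase plane -/

/-- The phase-plane energy of a front, `y(w) = q(w)²` with `q = -W'` as a function of `w = W`.
In terms of `y` the phase-plane equation `q q' = c q - g` has no singularity at `q = 0`. No value is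
prescribed at `w = 0`. -/
abbrev IsPhaseEnergy (g : ℝ → ℝ) (c : ℝ) (y : ℝ → ℝ) : Prop :=
  IsTerminalSolution (fun r => 2 * c * √r) (fun w => -(2 * g w)) 0 1 y

lemma lipschitzWith_max_sqrt {e : ℝ≥0} (he : 0 < e) : LipschitzWith e⁻¹ fun r => max √r e := by
  have hsq : ∀ r : ℝ, max √r e ^ 2 = max r (e ^ 2) := fun r => by
    rw [← Real.sq_sqrt (le_max_of_le_right (sq_nonneg (e : ℝ)) : 0 ≤ max r (e ^ 2)),
      Real.sqrt_monotone.map_max, Real.sqrt_sq e.coe_nonneg]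
  refine LipschitzWith.of_dist_le_mul fun r s => ?_
  set p := max √r e
  set q := max √s e
  have hp : (e : ℝ) ≤ p := le_max_right ..
  have hq : (e : ℝ) ≤ q := le_max_right ..
  have he' : (0 : ℝ) < e := he
  rw [NNReal.coe_inv, inv_mul_eq_div, le_div_iff₀ he', Real.dist_eq, Real.dist_eq]
  calc |p - q| * e ≤ |p - q| * |p + q| := by
        gcongr
        exact le_abs.2 (.inl (by linarith))
    _ = |max r (e ^ 2) - max s (e ^ 2)| := by rw [← hsq, ← hsq, sq_sub_sq, mul_comm, abs_mul]
    _ ≤ |r - s| := abs_max_sub_max_le_abs ..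

lemma tendstoUniformly_max_sqrt {ι : Type*} {l : Filter ι} {e : ι → ℝ} (he : Tendsto e l (𝓝 0)) :
    TendstoUniformly (fun i r => max √r (e i)) Real.sqrt l := by
  rw [Metric.tendstoUniformly_iff]
  intro ε hε
  filter_upwards [he.eventually_lt_const hε] with i hi r
  rw [dist_comm, Real.dist_eq, abs_of_nonneg (sub_nonneg.2 (le_max_left ..)), sub_lt_iff_lt_add',
    max_lt_iff]
  constructor <;> linarith [Real.sqrt_nonneg r]

lemma exists_isPhaseEnergy {g : ℝ → ℝ} {c : ℝ} (hc : 0 ≤ c) (hg : ContinuousOn g (Icc 0 1)) :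
    ∃ y, IsPhaseEnergy g c y := by
  lift c to ℝ≥0 using hc
  obtain ⟨G, hG⟩ := isCompact_Icc.exists_bound_of_continuousOn hg
  lift G to ℝ≥0 using (norm_nonneg _).trans (hG 0 (by simp))
  let e : ℕ → ℝ≥0 := fun n => 1 / (n + 1)
  have he_pos : ∀ n, 0 < e n := fun n => by positivity
  have he_le : ∀ n, (e n : ℝ) ≤ 1 := fun n => by
    exact_mod_cast div_le_one_of_le₀ (le_add_of_nonneg_left n.cast_nonneg) (by positivity)
  -- Since `2cA + 2G ≤ A²`, the regularized solutions cannot leave `[-A², A²]`.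
  let A : ℝ≥0 := 2 * c + 2 * G + 1
  have hA : 1 ≤ A := le_add_self
  have hbound : ∀ n (r : ℝ), |r| ≤ (A ^ 2 : ℝ≥0) * (1 - 0) → ∀ w ∈ Icc (0 : ℝ) 1,
      |2 * c * max √r (e n) + -(2 * g w)| ≤ (A ^ 2 : ℝ≥0) := by
    intro n r hr w hw
    rw [sub_zero, mul_one, NNReal.coe_pow] at hr
    have hsqrt : max √r (e n) ≤ A := max_le
      (Real.sqrt_le_left A.coe_nonneg |>.2 ((le_abs_self r).trans hr))
      ((he_le n).trans (mod_cast hA))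
    have hpos : 0 ≤ max √r (e n) := le_max_of_le_left (Real.sqrt_nonneg r)
    calc |2 * c * max √r (e n) + -(2 * g w)| ≤ |2 * c * max √r (e n)| + |-(2 * g w)| :=
          abs_add_le ..
      _ = 2 * c * max √r (e n) + 2 * ‖g w‖ := by
          rw [abs_neg, abs_of_nonneg (mul_nonneg (by positivity) hpos), abs_mul, abs_two,
            Real.norm_eq_abs]
      _ ≤ 2 * c * A + 2 * G := by gcongr; exact hG w hw
      _ ≤ (A ^ 2 : ℝ≥0) := by push_cast [A]; nlinarith [c.coe_nonneg, G.coe_nonneg]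
  have hlip : ∀ n, LipschitzWith (‖(2 * c : ℝ)‖₊ * (e n)⁻¹) fun r => 2 * c * max √r (e n) :=
    fun n => (lipschitzWith_smul (2 * c : ℝ)).comp (lipschitzWith_max_sqrt (he_pos n))
  choose Y hY using fun n => IsTerminalSolution.exists_of_lipschitzWith zero_le_one (hlip n)
    (hg.const_mul 2).neg (hbound n)
  have hsqrt : TendstoUniformly (fun n r => max √r (e n)) Real.sqrt atTop :=
    tendstoUniformly_max_sqrt (by simpa [e] using tendsto_one_div_add_atTop_nhds_zero_nat (𝕜 := ℝ))
  have huc : UniformContinuous Real.sqrt := hsqrt.uniformContinuous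
    (.of_forall fun n => (lipschitzWith_max_sqrt (he_pos n)).uniformContinuous)
  have hmul : UniformContinuous fun r : ℝ => 2 * c * r := Real.uniformContinuous_const_mul
  exact IsTerminalSolution.exists_of_tendstoUniformly zero_le_one
    (fun n => (Real.sqrt_monotone.max monotone_const).const_mul (by positivity))
    (hmul.comp huc) (hmul.comp_tendstoUniformly hsqrt) hY

lemma IsPhaseEnergy.pos {g y : ℝ → ℝ} {c w : ℝ} (hy : IsPhaseEnergy g c y)
    (hg : ∀ w ∈ Ioo 0 1, 0 < g w) (hw : w ∈ Ioo 0 1) : 0 < y w := by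
  have nonneg : ∀ v ∈ Ioo 0 1, 0 ≤ y v := fun v hv => by
    have hIoo : Ioo v 1 ⊆ Ioo 0 1 := Ioo_subset_Ioo_left hv.1.le
    have := le_add_mul_of_le_hasDerivAt_of_lt (d := fun x => -y x) (M := 0) hv.2.le le_rfl
      (hy.continuousOn.mono (Icc_subset_Icc_left hv.1.le)).neg
      (fun x hx => (hy.hasDerivAt x (hIoo hx)).neg) (by simp [hy.terminal]) (fun x hx hlt => by
        rw [Real.sqrt_eq_zero_of_nonpos (neg_pos.1 hlt).le]
        linarith [hg x (hIoo hx)])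
    linarith
  refine (nonneg w hw).lt_of_ne' fun hyw => ?_
  have hmin : IsLocalMin y w := by
    filter_upwards [isOpen_Ioo.mem_nhds hw] with v hv
    exact hyw.trans_le (nonneg v hv)
  have := hmin.hasDerivAt_eq_zero (hy.hasDerivAt w hw)
  rw [hyw, Real.sqrt_zero] at this
  linarith [hg w hw]

namespace IsFront

variable {g g₂ V y : ℝ → ℝ} {c k : ℝ}

lemma contDiff (hV : IsFront g c V) : ContDiff ℝ 2 V := hV.1

lemma ode (hV : IsFront g c V) (ξ : ℝ) : deriv (deriv V) ξ + c * deriv V ξ + g (V ξ) = 0 :=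
  hV.2.1 ξ

lemma tendsto_atBot (hV : IsFront g c V) : Tendsto V atBot (𝓝 1) := hV.2.2.1

lemma tendsto_atTop (hV : IsFront g c V) : Tendsto V atTop (𝓝 0) := hV.2.2.2.1

lemma deriv_neg (hV : IsFront g c V) (ξ : ℝ) : deriv V ξ < 0 := hV.2.2.2.2 ξ

lemma hasDerivAt (hV : IsFront g c V) (ξ : ℝ) : HasDerivAt V (deriv V ξ) ξ :=
  (hV.contDiff.differentiable two_ne_zero ξ).hasDerivAt

lemma hasDerivAt_deriv (hV : IsFront g c V) (ξ : ℝ) :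
    HasDerivAt (deriv V) (-(c * deriv V ξ) - g (V ξ)) ξ :=
  (hV.contDiff.deriv'.differentiable one_ne_zero ξ).hasDerivAt.congr_deriv
    (by linear_combination hV.ode ξ)

lemma strictAnti (hV : IsFront g c V) : StrictAnti V :=
  strictAnti_of_deriv_neg hV.deriv_neg

lemma mem_Ioo (hV : IsFront g c V) (ξ : ℝ) : V ξ ∈ Ioo 0 1 :=
  ⟨(hV.strictAnti.antitone.le_of_tendsto hV.tendsto_atTop (ξ + 1)).trans_lt
      (hV.strictAnti (lt_add_one ξ)),
    (hV.strictAnti (sub_one_lt ξ)).trans_le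
      (hV.strictAnti.antitone.ge_of_tendsto hV.tendsto_atBot (ξ - 1))⟩

-- If `c ≤ 0` then `V` is concave, so it lies below its tangent line at `0` and reaches `0`.
lemma speed_pos (hV : IsFront g c V) (hg : ∀ w ∈ Ioo 0 1, 0 < g w) : 0 < c := by
  by_contra! hc
  have hslope : deriv V 0 < 0 := hV.deriv_neg 0
  have hanti : Antitone (deriv V) :=
    antitone_of_hasDerivAt_nonpos hV.hasDerivAt_deriv fun ξ => by
      have := hg _ (hV.mem_Ioo ξ)
      have := mul_nonneg_of_nonpos_of_nonpos hc (hV.deriv_neg ξ).le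
      simp only [Pi.zero_apply]
      linarith
  have hx : 0 ≤ V 0 / -deriv V 0 := div_nonneg (hV.mem_Ioo 0).1.le (by linarith)
  have htangent := (convex_Ici 0).image_sub_le_mul_sub_of_deriv_le
    hV.contDiff.continuous.continuousOn (hV.contDiff.differentiable two_ne_zero).differentiableOn
    (fun ξ hξ => hanti (interior_subset hξ)) 0 self_mem_Ici _ hx hx
  have hzero : deriv V 0 * (V 0 / -deriv V 0 - 0) = -V 0 := by
    field_simp [hslope.ne]
    simp
  linarith [(hV.mem_Ioo (V 0 / -deriv V 0)).1]

lemma comp_mul_left (hV : IsFront g c V) (hk : 0 < k) :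
    IsFront (fun w => k ^ 2 * g w) (k * c) (fun ξ => V (k * ξ)) := by
  have hd : deriv (fun ξ => V (k * ξ)) = fun ξ => k * deriv V (k * ξ) :=
    funext fun ξ => deriv_comp_mul_left k V ξ
  refine ⟨hV.contDiff.comp (contDiff_const.mul contDiff_id), fun ξ => ?_,
    hV.tendsto_atBot.comp (tendsto_id.const_mul_atBot hk),
    hV.tendsto_atTop.comp (tendsto_id.const_mul_atTop hk), fun ξ => ?_⟩
  · rw [hd, deriv_const_mul_field, deriv_comp_mul_left, smul_eq_mul]
    linear_combination k ^ 2 * hV.ode (k * ξ)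
  · rw [hd]
    exact mul_neg_of_pos_of_neg hk (hV.deriv_neg _)

lemma phaseEnergy_le_sq_deriv (hV : IsFront g₂ c V) (hy : IsPhaseEnergy g c y) (hc : 0 ≤ c)
    (hle : ∀ w ∈ Ioo 0 1, g w ≤ g₂ w) (ξ : ℝ) : y (V ξ) ≤ deriv V ξ ^ 2 := by
  have hderiv : ∀ x, HasDerivAt (fun x => y (V x) - deriv V x ^ 2)
      (2 * deriv V x * (c * (√(y (V x)) + deriv V x) + (g₂ (V x) - g (V x)))) x := fun x =>
    (((hy.hasDerivAt _ (hV.mem_Ioo x)).comp x (hV.hasDerivAt x)).sub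
      ((hV.hasDerivAt_deriv x).pow 2)).congr_deriv (by ring)
  refine sub_nonpos.1 (le_of_forall_pos_le_add fun ε hε => ?_)
  have hlim : Tendsto (fun t => y (V t)) atBot (𝓝 0) := by
    rw [← hy.terminal]
    exact (hy.continuousOn 1 (right_mem_Icc.2 zero_le_one)).tendsto.comp
      (tendsto_nhdsWithin_iff.2 ⟨hV.tendsto_atBot,
        .of_forall fun t => Ioo_subset_Icc_self (hV.mem_Ioo t)⟩)
  obtain ⟨t, htε, htξ⟩ :=
    ((hlim.eventually_lt_const hε).and (eventually_le_atBot ξ)).exists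
  have := le_add_mul_of_hasDerivAt_le_of_lt (M := ε) htξ le_rfl
    (HasDerivAt.continuousOn fun x _ => hderiv x) (fun x _ => hderiv x)
    (by linarith [sq_nonneg (deriv V t)]) (fun x _ hεx => by
      have hneg := hV.deriv_neg x
      have hsqrt : -deriv V x < √(y (V x)) :=
        Real.lt_sqrt_of_sq_lt (by linarith [neg_sq (deriv V x)])
      have : 0 ≤ c * (√(y (V x)) + deriv V x) := mul_nonneg hc (by linarith)
      have := hle _ (hV.mem_Ioo x)
      exact mul_nonpos_of_nonpos_of_nonneg (by linarith) (by linarith))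
  linarith

lemma of_hasDerivAt_neg_sqrt {W : ℝ → ℝ} (hy : IsPhaseEnergy g c y) (hg : ContinuousOn g (Ioo 0 1))
    (hy_pos : ∀ w ∈ Ioo 0 1, 0 < y w) (hW : ∀ ξ, W ξ ∈ Ioo 0 1)
    (hW' : ∀ ξ, HasDerivAt W (-√(y (W ξ))) ξ) (hbot : Tendsto W atBot (𝓝 1))
    (htop : Tendsto W atTop (𝓝 0)) : IsFront g c W := by
  have hderiv : deriv W = fun ξ => -√(y (W ξ)) := funext fun ξ => (hW' ξ).deriv
  have hsqrt_pos : ∀ ξ, 0 < √(y (W ξ)) := fun ξ => Real.sqrt_pos.2 (hy_pos _ (hW ξ))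
  have hW'' : ∀ ξ, HasDerivAt (deriv W) (c * √(y (W ξ)) - g (W ξ)) ξ := fun ξ => by
    have hne := (hsqrt_pos ξ).ne'
    rw [hderiv]
    exact (((hy.hasDerivAt _ (hW ξ)).comp ξ (hW' ξ)).sqrt (hy_pos _ (hW ξ)).ne').neg.congr_deriv
      (by simp only [Function.comp_apply]; field_simp; ring)
  have hderiv₂ : deriv (deriv W) = fun ξ => c * √(y (W ξ)) - g (W ξ) :=
    funext fun ξ => (hW'' ξ).deriv
  have hW_cont : Continuous W := continuous_iff_continuousAt.2 fun ξ => (hW' ξ).continuousAt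
  have hy_cont : Continuous fun ξ => y (W ξ) :=
    hy.continuousOn.comp_continuous hW_cont fun ξ => Ioo_subset_Icc_self (hW ξ)
  refine ⟨?_, fun ξ => ?_, hbot, htop, fun ξ => ?_⟩
  · rw [← one_add_one_eq_two, contDiff_succ_iff_deriv, contDiff_one_iff_deriv, hderiv₂]
    exact ⟨fun ξ => (hW' ξ).differentiableAt, by simp, fun ξ => (hW'' ξ).differentiableAt,
      (hy_cont.sqrt.const_mul c).sub (hg.comp_continuous hW_cont hW)⟩
  · rw [hderiv₂, hderiv]
    ring
  · rw [hderiv]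
    exact neg_neg_of_pos (hsqrt_pos ξ)

-- The sought front is `V` run in slow motion, so its global existence and its limits need no
-- study of the endpoints.
lemma exists_of_le (hV : IsFront g₂ c V) (hg : ContinuousOn g (Icc 0 1))
    (hg_pos : ∀ w ∈ Ioo 0 1, 0 < g w) (hle : ∀ w ∈ Ioo 0 1, g w ≤ g₂ w) :
    ∃ W, IsFront g c W := by
  have hc : 0 < c := hV.speed_pos fun w hw => (hg_pos w hw).trans_le (hle w hw)
  obtain ⟨y, hy⟩ := exists_isPhaseEnergy hc.le hg
  have hsqrt_pos : ∀ ξ, 0 < √(y (V ξ)) := fun ξ => Real.sqrt_pos.2 (hy.pos hg_pos (hV.mem_Ioo ξ))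
  have hsqrt_cont : Continuous fun ξ => √(y (V ξ)) :=
    (hy.continuousOn.comp_continuous hV.contDiff.continuous
      fun ξ => Ioo_subset_Icc_self (hV.mem_Ioo ξ)).sqrt
  have hratio : ∀ ξ, 1 ≤ -deriv V ξ / √(y (V ξ)) := fun ξ => by
    rw [one_le_div (hsqrt_pos ξ), Real.sqrt_le_left (neg_pos.2 (hV.deriv_neg ξ)).le, neg_sq]
    exact hV.phaseEnergy_le_sq_deriv hy hc.le hle ξ
  obtain ⟨S, hS⟩ := exists_orderIso_hasDerivAt_inv
    ((hV.contDiff.continuous_deriv one_le_two).neg.div hsqrt_cont fun ξ => (hsqrt_pos ξ).ne')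
    one_pos hratio
  refine ⟨V ∘ S, of_hasDerivAt_neg_sqrt hy (hg.mono Ioo_subset_Icc_self) (fun w => hy.pos hg_pos)
    (fun ξ => hV.mem_Ioo _) (fun ξ => ?_) (hV.tendsto_atBot.comp S.tendsto_atBot)
    (hV.tendsto_atTop.comp S.tendsto_atTop)⟩
  refine ((hV.hasDerivAt (S ξ)).comp ξ (hS ξ)).congr_deriv ?_
  have := (hV.deriv_neg (S ξ)).ne
  simp only [Pi.div_apply, Pi.neg_apply, Function.comp_apply]
  field_simp

lemma exists_of_le_sq_mul (hV : IsFront g₂ c V) (hk : 0 < k) (hg : ContinuousOn g (Icc 0 1))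
    (hg_pos : ∀ w ∈ Ioo 0 1, 0 < g w) (hle : ∀ w ∈ Ioo 0 1, g w ≤ k ^ 2 * g₂ w) :
    ∃ W, IsFront g (k * c) W :=
  (hV.comp_mul_left hk).exists_of_le hg hg_pos hle

end IsFront

/-! ### Minimal speeds -/

/-- The set of speeds at which the nonlinearity `g` admits a front; the minimal speed of `g` is its
least element. -/
def frontSpeeds (g : ℝ → ℝ) : Set ℝ :=
  {c | ∃ W, IsFront g c W}

lemma le_mul_of_mem_lowerBounds_frontSpeeds {g h : ℝ → ℝ} {a b k : ℝ}
    (hg : ContinuousOn g (Icc 0 1)) (hg_pos : ∀ w ∈ Ioo 0 1, 0 < g w) (hk : 0 < k)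
    (hle : ∀ w ∈ Ioo 0 1, g w ≤ k ^ 2 * h w) (ha : a ∈ lowerBounds (frontSpeeds g))
    (hb : b ∈ frontSpeeds h) : a ≤ k * b := by
  obtain ⟨V, hV⟩ := hb
  exact ha (hV.exists_of_le_sq_mul hk hg hg_pos hle)

lemma tendsto_of_isLeast_frontSpeeds {ι : Type*} {l : Filter ι} {f : ι → ℝ → ℝ} {g : ℝ → ℝ}
    {cstar : ι → ℝ} {c : ℝ} (hg : ContinuousOn g (Icc 0 1)) (hg_pos : ∀ w ∈ Ioo 0 1, 0 < g w)
    (hf : ∀ᶠ i in l, ContinuousOn (f i) (Icc 0 1)) (hf_pos : ∀ᶠ i in l, ∀ w ∈ Ioo 0 1, 0 < f i w)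
    (hclose : ∀ k > 1, ∀ᶠ i in l, ∀ w ∈ Ioo 0 1, f i w ≤ k * g w ∧ g w ≤ k * f i w)
    (hcstar : ∀ᶠ i in l, IsLeast (frontSpeeds (f i)) (cstar i))
    (hc : IsLeast (frontSpeeds g) c) : Tendsto cstar l (𝓝 c) := by
  have exists_factor : ∀ {a b : ℝ}, a < b → ∃ k > 1, k * a < b := fun {a b} hab => by
    have hlim : Tendsto (fun k : ℝ => k * a) (𝓝[>] 1) (𝓝 a) := by
      simpa using ((continuous_mul_const a).tendsto 1).mono_left nhdsWithin_le_nhds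
    obtain ⟨k, hkb, hk⟩ := ((hlim.eventually_lt_const hab).and self_mem_nhdsWithin).exists
    exact ⟨k, hk, hkb⟩
  refine tendsto_order.2 ⟨fun a ha => ?_, fun b hb => ?_⟩
  · obtain ⟨k, hk, hka⟩ := exists_factor ha
    have hk₀ : 0 < k := one_pos.trans hk
    filter_upwards [hclose (k ^ 2) (one_lt_pow₀ hk two_ne_zero), hcstar] with i hi hci
    exact lt_of_mul_lt_mul_left (hka.trans_le (le_mul_of_mem_lowerBounds_frontSpeeds hg hg_pos hk₀
      (fun w hw => (hi w hw).2) hc.2 hci.1)) hk₀.le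
  · obtain ⟨k, hk, hkb⟩ := exists_factor hb
    filter_upwards [hclose (k ^ 2) (one_lt_pow₀ hk two_ne_zero), hcstar, hf, hf_pos]
      with i hi hci hfi hfi_pos
    exact (le_mul_of_mem_lowerBounds_frontSpeeds hfi hfi_pos (one_pos.trans hk)
      (fun w hw => (hi w hw).1) hci.2 hc.1).trans_lt hkb

/-! ### Relative closeness -/

lemma isBigO_principal_of_isCompact {X E F : Type*} [TopologicalSpace X] [Norm E]
    [SeminormedAddCommGroup F] {K : Set X} {p : X → E} {g : X → F} (hK : IsCompact K)
    (h : ∀ x ∈ K, p =O[𝓝[K] x] g) : p =O[𝓟 K] g :=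
  hK.induction_on (p := fun s => p =O[𝓟 s] g) (by simp)
    (fun _ _ hst ht => ht.mono (principal_mono.2 hst))
    (fun _ _ hs ht => by rw [← sup_principal]; exact hs.sup ht)
    (fun x hx => by
      obtain ⟨C, hC⟩ := (h x hx).bound
      exact ⟨_, hC, isBigO_principal.2 ⟨C, fun _ => id⟩⟩)

lemma isBigO_nhdsWithin_of_derivWithin_ne_zero {p g : ℝ → ℝ} {s : Set ℝ} {x : ℝ}
    (hp : DifferentiableWithinAt ℝ p s x) (hpx : p x = 0) (hgx : g x = 0)
    (hg' : derivWithin g s x ≠ 0) : p =O[𝓝[s] x] g := by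
  have hg := (differentiableWithinAt_of_derivWithin_ne_zero hg').hasDerivWithinAt
  simpa [Function.comp_def, hpx, hgx] using
    hp.hasDerivWithinAt.isBigO_sub.trans (hg.isTheta_sub hg').symm.isBigO

lemma isBigO_principal_Icc_of_simple_zeros {p g : ℝ → ℝ} {a b : ℝ}
    (hp : DifferentiableOn ℝ p (Icc a b)) (hpa : p a = 0) (hpb : p b = 0)
    (hg : ContinuousOn g (Icc a b)) (hga : g a = 0) (hgb : g b = 0)
    (hg'a : derivWithin g (Icc a b) a ≠ 0) (hg'b : derivWithin g (Icc a b) b ≠ 0)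
    (hg_ne : ∀ w ∈ Ioo a b, g w ≠ 0) : p =O[𝓟 (Icc a b)] g := by
  refine isBigO_principal_of_isCompact isCompact_Icc fun x hx => ?_
  obtain rfl | hax := hx.1.eq_or_lt
  · exact isBigO_nhdsWithin_of_derivWithin_ne_zero (hp _ hx) hpa hga hg'a
  obtain rfl | hxb := hx.2.eq_or_lt
  · exact isBigO_nhdsWithin_of_derivWithin_ne_zero (hp _ hx) hpb hgb hg'b
  have hgx := hg_ne x ⟨hax, hxb⟩
  refine isBigO_of_div_tendsto_nhds ?_ _ ((hp.continuousOn x hx).div (hg x hx) hgx)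
  filter_upwards [(hg x hx).eventually_ne hgx] with w hw hw₀ using absurd hw₀ hw

lemma norm_mul_le_of_norm_derivWithin_le {E : Type*} [NormedAddCommGroup E] [NormedSpace ℝ E]
    {h : ℝ → E} {a b B w : ℝ} (hh : DifferentiableOn ℝ h (Icc a b)) (ha : h a = 0) (hb : h b = 0)
    (hB : ∀ x ∈ Icc a b, ‖derivWithin h (Icc a b) x‖ ≤ B) (hw : w ∈ Icc a b) :
    ‖h w‖ * (b - a) ≤ 2 * B * ((w - a) * (b - w)) := by
  have hab : a ≤ b := hw.1.trans hw.2
  have hwa : 0 ≤ w - a := sub_nonneg.2 hw.1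
  have hbw : 0 ≤ b - w := sub_nonneg.2 hw.2
  have hleft : ‖h w‖ ≤ B * (w - a) := by
    simpa [ha, abs_of_nonneg hwa] using
      (convex_Icc a b).norm_image_sub_le_of_norm_derivWithin_le hh hB (left_mem_Icc.2 hab) hw
  have hright : ‖h w‖ ≤ B * (b - w) := by
    simpa [hb, abs_of_nonneg hbw] using
      (convex_Icc a b).norm_image_sub_le_of_norm_derivWithin_le hh hB hw (right_mem_Icc.2 hab)
  calc ‖h w‖ * (b - a) = ‖h w‖ * (b - w) + ‖h w‖ * (w - a) := by ring
    _ ≤ B * (w - a) * (b - w) + B * (b - w) * (w - a) := by gcongr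
    _ = 2 * B * ((w - a) * (b - w)) := by ring

lemma eventually_abs_sub_le_mul_abs {ι : Type*} {l : Filter ι} {f : ι → ℝ → ℝ} {g : ℝ → ℝ}
    {a b ε : ℝ} (hab : a < b) (hε : 0 < ε) (hg : DifferentiableOn ℝ g (Icc a b)) (hga : g a = 0)
    (hgb : g b = 0) (hg'a : derivWithin g (Icc a b) a ≠ 0) (hg'b : derivWithin g (Icc a b) b ≠ 0)
    (hg_ne : ∀ w ∈ Ioo a b, g w ≠ 0) (hf : ∀ᶠ i in l, DifferentiableOn ℝ (f i) (Icc a b))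
    (hfa : ∀ᶠ i in l, f i a = 0) (hfb : ∀ᶠ i in l, f i b = 0)
    (hderiv : TendstoUniformlyOn (fun i => derivWithin (f i) (Icc a b))
      (derivWithin g (Icc a b)) l (Icc a b)) :
    ∀ᶠ i in l, ∀ w ∈ Icc a b, |f i w - g w| ≤ ε * |g w| := by
  obtain ⟨C, hC, hC_bound⟩ := (isBigO_principal_Icc_of_simple_zeros
    (p := fun w => (w - a) * (b - w)) (by fun_prop) (by simp) (by simp) hg.continuousOn hga hgb
    hg'a hg'b hg_ne).exists_pos
  have hlen : 0 < b - a := sub_pos.2 hab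
  set B := ε * (b - a) / (2 * C)
  have hB : 0 < B := by positivity
  filter_upwards [hf, hfa, hfb, Metric.tendstoUniformlyOn_iff.1 hderiv B hB]
    with i hfi hfai hfbi hi w hw
  have hsub : ∀ x ∈ Icc a b, ‖derivWithin (f i - g) (Icc a b) x‖ ≤ B := fun x hx => by
    rw [derivWithin_sub (hfi x hx) (hg x hx), ← dist_eq_norm, dist_comm]
    exact (hi x hx).le
  refine le_of_mul_le_mul_right ?_ hlen
  calc |f i w - g w| * (b - a) ≤ 2 * B * ((w - a) * (b - w)) :=
        norm_mul_le_of_norm_derivWithin_le (hfi.sub hg) (by simp [hfai, hga]) (by simp [hfbi, hgb])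
          hsub hw
    _ ≤ 2 * B * (C * |g w|) := by
        gcongr 2 * B * ?_
        exact (le_abs_self _).trans (isBigOWith_principal.1 hC_bound w hw)
    _ = ε * |g w| * (b - a) := by
        simp only [B]
        field_simp

/-! ### Continuous dependence -/

/-- A monostable nonlinearity on `[0, 1]`, with simple zeros at both endpoints. -/
structure IsMonostable (g : ℝ → ℝ) : Prop where
  differentiableOn : DifferentiableOn ℝ g (Icc 0 1)
  map_zero : g 0 = 0
  map_one : g 1 = 0
  derivWithin_zero_ne : derivWithin g (Icc 0 1) 0 ≠ 0
  derivWithin_one_ne : derivWithin g (Icc 0 1) 1 ≠ 0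
  pos : ∀ w ∈ Ioo 0 1, 0 < g w

lemma IsMonostable.eventually_le_mul {ι : Type*} {l : Filter ι} {f : ι → ℝ → ℝ} {g : ℝ → ℝ} {k : ℝ}
    (hg : IsMonostable g) (hf : ∀ᶠ i in l, IsMonostable (f i))
    (hderiv : TendstoUniformlyOn (fun i => derivWithin (f i) (Icc 0 1))
      (derivWithin g (Icc 0 1)) l (Icc 0 1)) (hk : 1 < k) :
    ∀ᶠ i in l, ∀ w ∈ Ioo 0 1, f i w ≤ k * g w ∧ g w ≤ k * f i w := by
  have hk₀ : 0 < k := one_pos.trans hk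
  filter_upwards [eventually_abs_sub_le_mul_abs one_pos (sub_pos.2 (inv_lt_one_of_one_lt₀ hk))
    hg.differentiableOn hg.map_zero hg.map_one hg.derivWithin_zero_ne hg.derivWithin_one_ne
    (fun w hw => (hg.pos w hw).ne') (hf.mono fun _ h => h.differentiableOn)
    (hf.mono fun _ h => h.map_zero) (hf.mono fun _ h => h.map_one) hderiv] with i hi w hw
  have hgw := hg.pos w hw
  have hsub := abs_le.1 (hi w (Ioo_subset_Icc_self hw))
  rw [abs_of_pos hgw] at hsub
  have hlower : k⁻¹ * g w ≤ f i w := by linarith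
  have hupper : f i w ≤ (2 - k⁻¹) * g w := by linarith
  have hfactor : 2 - k⁻¹ ≤ k := by
    field_simp
    nlinarith [sq_nonneg (k - 1)]
  exact ⟨hupper.trans (by gcongr), (inv_mul_le_iff₀ hk₀).1 hlower⟩

lemma tendstoUniformlyOn_of_dist_le_mul {S X Y : Type*} [PseudoMetricSpace S] [PseudoMetricSpace Y]
    {F : S → X → Y} {A : Set S} {K : Set X} {L : ℝ} {s₀ : S}
    (hF : ∀ s ∈ A, ∀ x ∈ K, dist (F s₀ x) (F s x) ≤ L * dist s₀ s) :
    TendstoUniformlyOn F (F s₀) (𝓝[A] s₀) K := by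
  rw [Metric.tendstoUniformlyOn_iff]
  intro ε hε
  have hlim : Tendsto (fun s => L * dist s₀ s) (𝓝[A] s₀) (𝓝 0) := by
    have : Continuous fun s => L * dist s₀ s := by fun_prop
    simpa using (this.tendsto s₀).mono_left nhdsWithin_le_nhds
  filter_upwards [hlim.eventually_lt_const hε, self_mem_nhdsWithin] with s hs hsA x hx
  exact (hF s hsA x hx).trans_lt hs

theorem cstar_continuous_general {S : Type*} [TopologicalSpace S] {A : Set S} {f : S → ℝ → ℝ}
    {cstar : S → ℝ} (hf : ∀ s ∈ A, IsMonostable (f s))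
    (hderiv : ∀ s₀ ∈ A, TendstoUniformlyOn (fun s => derivWithin (f s) (Icc 0 1))
      (derivWithin (f s₀) (Icc 0 1)) (𝓝[A] s₀) (Icc 0 1))
    (hcstar : ∀ s ∈ A, IsLeast (frontSpeeds (f s)) (cstar s)) : ContinuousOn cstar A := by
  intro s₀ hs₀
  have hf_ev : ∀ᶠ s in 𝓝[A] s₀, IsMonostable (f s) := eventually_nhdsWithin_of_forall hf
  exact tendsto_of_isLeast_frontSpeeds (hf s₀ hs₀).differentiableOn.continuousOn (hf s₀ hs₀).pos
    (hf_ev.mono fun _ h => h.differentiableOn.continuousOn) (hf_ev.mono fun _ h => h.pos)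
    (fun _ => (hf s₀ hs₀).eventually_le_mul hf_ev (hderiv s₀ hs₀))
    (eventually_nhdsWithin_of_forall hcstar) (hcstar s₀ hs₀)

/-- Under (A1)-(A2), the minimal traveling wave speed `s ↦ c*(s)` is continuous on `[0, ∞)`. -/
theorem cstar_continuous
    (f : ℝ → ℝ → ℝ) (cstar : ℝ → ℝ)
    -- (A1)
    (hA1 : ∀ s, 0 ≤ s →
      ContDiffOn ℝ 2 (fun w => f w s) (Icc 0 1) ∧
      f 0 s = 0 ∧ f 1 s = 0 ∧
      derivWithin (fun w => f w s) (Icc 0 1) 0 = 1 ∧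
      derivWithin (fun w => f w s) (Icc 0 1) 1 < 0 ∧
      (∀ w ∈ Ioo (0:ℝ) 1, 0 < f w s))
    -- (A2)
    (hA2 : ∃ L₀ > (0:ℝ), ∀ n : ℕ, n ≤ 2 → ∀ w ∈ Icc (0:ℝ) 1, ∀ sa sb : ℝ, 0 ≤ sa → 0 ≤ sb →
      |iteratedDerivWithin n (fun w => f w sa) (Icc 0 1) w -
        iteratedDerivWithin n (fun w => f w sb) (Icc 0 1) w| ≤ L₀ * |sa - sb|)
    -- minimal-speed characterization
    (hmin : ∀ s, 0 ≤ s → 2 ≤ cstar s ∧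
      ∀ c, (∃ W : ℝ → ℝ, IsFront (fun w => f w s) c W) ↔ cstar s ≤ c)
    -- uniqueness up to translation of the minimal front
    (huniq : ∀ s, 0 ≤ s → ∀ W₁ W₂ : ℝ → ℝ, IsFront (fun w => f w s) (cstar s) W₁ →
      IsFront (fun w => f w s) (cstar s) W₂ → ∃ τ, ∀ ξ, W₂ ξ = W₁ (ξ + τ)) :
    ContinuousOn cstar (Ici 0) := by
  obtain ⟨L, -, hL⟩ := hA2
  refine cstar_continuous_general (f := fun s w => f w s) (fun s hs => ?_)
    (fun s₀ hs₀ => tendstoUniformlyOn_of_dist_le_mul (L := L) fun s hs w hw => ?_)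
    fun s hs => ⟨((hmin s hs).2 _).2 le_rfl, fun c => ((hmin s hs).2 c).1⟩
  · obtain ⟨hC2, h0, h1, h0', h1', hpos⟩ := hA1 s hs
    exact ⟨hC2.differentiableOn two_ne_zero, h0, h1, by simp [h0'], h1'.ne, hpos⟩
  · simpa only [iteratedDerivWithin_one, Real.dist_eq] using hL 1 one_le_two w hw s₀ s hs₀ hs
end
end

section
/- Let Ŵ : ℝ → (0,∞) be a bounded, positive C¹ function satisfying (J∗Ŵ)(ξ) + c₀*Ŵ'(ξ) + (γ₀ − 1)Ŵ(ξ) + 𝒥(ξ) = 0 for all sufficiently large ξ, where 𝒥 = 𝒥₁ + 𝒥₂ with 𝒥₁(ξ) = o(Ŵ(ξ)) as ξ → +∞, and there exist constants κ₁ ≥ κ₂ > 0 and ξ̄ ∈ ℝ such that κ₂ e^{−2λ₀ξ} ≤ 𝒥₂(ξ) ≤ κ₁ e^{−2λ₀ξ} for all ξ ≥ ξ̄. Then 𝒥₂(ξ) = o(Ŵ(ξ)) as ξ → +∞ (and consequently 𝒥(ξ) = o(Ŵ(ξ)) as ξ → +∞). -/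
open Filter Asymptotics MeasureTheory Set

noncomputable section

/-- A continuous, nonnegative, even, compactly supported dispersal kernel of total mass 1. -/
def IsKernel (J : ℝ → ℝ) : Prop :=
  Continuous J ∧ (∀ x, 0 ≤ J x) ∧ (∀ x, J (-x) = J x) ∧
  HasCompactSupport J ∧ (∫ x, J x) = 1

/-- The linearized minimal speed `c₀* = inf_{λ>0} (∫ J(x)e^{λx}dx + γ₀ - 1)/λ`. -/
noncomputable def c0star (J : ℝ → ℝ) (γ₀ : ℝ) : ℝ :=
  sInf ((fun l : ℝ => ((∫ x, J x * Real.exp (l * x)) + γ₀ - 1) / l) '' Ioi 0)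

/-!
Put `U = e^{2λ₀ξ} Ŵ`. Since `2λ₀` is not a root of `h(λ) = c₀* λ`, it satisfies `h(2λ₀) > c₀* 2λ₀`,
and this gap absorbs `𝒥₁`: in terms of `U` the equation says that
`K∗U - (∫ K) U + c₀* U' ≤ -κ₂` near `+∞`, where `K(z) = J(z) e^{2λ₀z}`. Here the left-hand side
vanishes on constants, so it is small wherever `U` is touched from below by a cone of small slope
`ε`. Hence no such touching takes place far to the right, and by a variational principle this
forces `U` to grow at least linearly. Thus `e^{-2λ₀ξ} = o(Ŵ)`.
-/

open scoped Topology

section ConesFromBelow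

theorem norm_le_of_hasFDerivAt_of_sub_mul_dist_le {E : Type*} [NormedAddCommGroup E]
    [NormedSpace ℝ E] {f : E → ℝ} {f' : E →L[ℝ] ℝ} {x : E} {ε : ℝ} (hf : HasFDerivAt f f' x)
    (hε : 0 ≤ ε) (hcone : ∀ᶠ y in 𝓝 x, f x - ε * dist y x ≤ f y) : ‖f'‖ ≤ ε := by
  have lower (v : E) : -(ε * ‖v‖) ≤ f' v := by
    have hline : Tendsto (fun t : ℝ => x + t • v) (𝓝[>] 0) (𝓝 x) :=
      (Continuous.tendsto' (by fun_prop) 0 x (by simp)).mono_left nhdsWithin_le_nhds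
    refine ge_of_tendsto (hf.hasLineDerivAt v).tendsto_slope_zero_right ?_
    filter_upwards [hline.eventually hcone, self_mem_nhdsWithin] with t ht (htpos : 0 < t)
    rw [dist_self_add_left, norm_smul, Real.norm_of_nonneg htpos.le] at ht
    rw [smul_eq_mul, ← div_eq_inv_mul, le_div_iff₀ htpos]
    linarith
  refine f'.opNorm_le_bound hε fun v => abs_le.2 ⟨lower v, ?_⟩
  have := lower (-v)
  rw [norm_neg, map_neg] at this
  exact neg_le_neg_iff.1 this

/-- A weak form of Ekeland's variational principle: `x` minimises `f + ε dist(·, b)` on `s`. -/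
theorem exists_forall_sub_mul_dist_le {X : Type*} [PseudoMetricSpace X] [ProperSpace X]
    {f : X → ℝ} {s : Set X} {b : X} {ε : ℝ} (hf : ContinuousOn f s) (hs : IsClosed s)
    (hbdd : BddBelow (f '' s)) (hb : b ∈ s) (hε : 0 < ε) :
    ∃ x ∈ s, f x + ε * dist x b ≤ f b ∧ ∀ y ∈ s, f x - ε * dist y x ≤ f y := by
  obtain ⟨m, hm⟩ := hbdd
  have hcont : ContinuousOn (fun y => f y + ε * dist y b) s := by fun_prop
  have hcoercive : ∀ᶠ y in cocompact X ⊓ 𝓟 s, f b + ε * dist b b ≤ f y + ε * dist y b := by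
    have hfar : ∀ᶠ y in cocompact X, f b - m ≤ ε * dist y b :=
      ((tendsto_dist_right_cocompact_atTop b).const_mul_atTop hε).eventually_ge_atTop _
    filter_upwards [hfar.filter_mono inf_le_left, mem_inf_of_right (mem_principal_self s)]
      with y hy hys
    have := hm (mem_image_of_mem f hys)
    rw [dist_self, mul_zero]
    linarith
  obtain ⟨x, hxs, hmin⟩ := hcont.exists_isMinOn' hs hb hcoercive
  refine ⟨x, hxs, by simpa using hmin hb, fun y hy => ?_⟩
  have hxy : f x + ε * dist x b ≤ f y + ε * dist y b := hmin hy
  have := mul_le_mul_of_nonneg_left (dist_triangle y x b) hε.le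
  linarith

end ConesFromBelow

theorem integral_mul_le_integral_sub_mul {G : Type*} [AddGroup G] [MeasurableSpace G]
    [MeasurableAdd G] [MeasurableNeg G] {ν : Measure G} [ν.IsAddLeftInvariant] [ν.IsNegInvariant]
    {J U : G → ℝ} {x : G} {m : ℝ} (hJ : Integrable J ν) (hJnonneg : ∀ z, 0 ≤ J z)
    (hJU : Integrable (fun y => J (x - y) * U y) ν) (hm : ∀ y, J (x - y) ≠ 0 → m ≤ U y) :
    (∫ z, J z ∂ν) * m ≤ ∫ y, J (x - y) * U y ∂ν := by
  rw [← integral_sub_left_eq_self J ν x, ← integral_mul_const]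
  refine integral_mono ((hJ.comp_sub_left x).mul_const m) hJU fun y => ?_
  by_cases hy : J (x - y) = 0
  · simp [hy]
  · exact mul_le_mul_of_nonneg_left (hm y hy) (hJnonneg _)

/-- The nonlocal operator `U ↦ J∗U + c U' + a U` of a dispersal kernel `J` in a frame moving with
speed `c`. -/
def dispersalOp (J : ℝ → ℝ) (c a : ℝ) (U : ℝ → ℝ) (x : ℝ) : ℝ :=
  (∫ y, J (x - y) * U y) + c * deriv U x + a * U x

theorem dispersalOp_add (J : ℝ → ℝ) (c a b : ℝ) (U : ℝ → ℝ) (x : ℝ) :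
    dispersalOp J c (a + b) U x = dispersalOp J c a U x + b * U x := by
  simp only [dispersalOp]
  ring

section Supersolution

variable {J U : ℝ → ℝ} {c R ε : ℝ}

theorem integrable_of_locallyIntegrable_of_hasCompactSupport (hJ : LocallyIntegrable J)
    (hJsupp : HasCompactSupport J) : Integrable J :=
  (integrableOn_iff_integrable_of_support_subset (subset_tsupport J)).1
    (hJ.integrableOn_isCompact hJsupp)

theorem integrable_sub_mul_of_hasCompactSupport (hJ : LocallyIntegrable J)
    (hJsupp : HasCompactSupport J) (hU : Continuous U) (x : ℝ) :
    Integrable fun y => J (x - y) * U y :=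
  (hJsupp.convolutionExists_left_of_continuous_right (.mul ℝ ℝ) hJ hU x).integrable_swap

theorem neg_mul_le_dispersalOp_neg_integral {x : ℝ} (hJ : LocallyIntegrable J)
    (hJnonneg : ∀ z, 0 ≤ J z) (hJsupp : HasCompactSupport J) (hR : 0 < R)
    (hJR : ∀ z, J z ≠ 0 → |z| ≤ R) (hU : Differentiable ℝ U) (hε : 0 ≤ ε)
    (hcone : ∀ y, dist y x ≤ R → U x - ε * dist y x ≤ U y) :
    -(ε * ((∫ z, J z) * R + |c|)) ≤ dispersalOp J c (-∫ z, J z) U x := by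
  have hconv : (∫ z, J z) * (U x - ε * R) ≤ ∫ y, J (x - y) * U y := by
    refine integral_mul_le_integral_sub_mul
      (integrable_of_locallyIntegrable_of_hasCompactSupport hJ hJsupp) hJnonneg
      (integrable_sub_mul_of_hasCompactSupport hJ hJsupp hU.continuous x) fun y hy => ?_
    have hyR : dist y x ≤ R := by
      rw [dist_comm]
      exact hJR _ hy
    have := mul_le_mul_of_nonneg_left hyR hε
    linarith [hcone y hyR]
  have hderiv : |deriv U x| ≤ ε := by
    rw [← Real.norm_eq_abs, norm_deriv_eq_norm_fderiv]
    refine norm_le_of_hasFDerivAt_of_sub_mul_dist_le (hU x).hasFDerivAt hε ?_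
    filter_upwards [Metric.closedBall_mem_nhds x hR] with y hy using hcone y hy
  have hdrift : -(|c| * ε) ≤ c * deriv U x := by
    refine (abs_le.1 ?_).1
    rw [abs_mul]
    exact mul_le_mul_of_nonneg_left hderiv (abs_nonneg c)
  rw [dispersalOp]
  linarith

theorem mul_sub_le_of_dispersalOp_neg_integral_lt {A B : ℝ} (hJ : LocallyIntegrable J)
    (hJnonneg : ∀ z, 0 ≤ J z) (hJsupp : HasCompactSupport J) (hR : 0 < R)
    (hJR : ∀ z, J z ≠ 0 → |z| ≤ R) (hU : Differentiable ℝ U) (hUnonneg : ∀ x, A ≤ x → 0 ≤ U x)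
    (hε : 0 < ε)
    (hop : ∀ x, A ≤ x → dispersalOp J c (-∫ z, J z) U x < -(ε * ((∫ z, J z) * R + |c|)))
    (hB : A ≤ B) : ε * (B - (A + R)) ≤ U B := by
  have hbdd : BddBelow (U '' Ici A) := ⟨0, forall_mem_image.2 hUnonneg⟩
  obtain ⟨x, hAx, hxB, hcone⟩ :=
    exists_forall_sub_mul_dist_le hU.continuous.continuousOn isClosed_Ici hbdd hB hε
  have hx : x < A + R := by
    by_contra! hx
    refine (hop x hAx).not_ge (neg_mul_le_dispersalOp_neg_integral hJ hJnonneg hJsupp hR hJR hU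
      hε.le fun y hy => hcone y ?_)
    rw [Real.dist_eq] at hy
    exact mem_Ici.2 (by linarith [(abs_le.1 hy).1])
  have hdist : B - (A + R) ≤ dist x B := by
    rw [dist_comm, Real.dist_eq]
    exact le_trans (by linarith) (le_abs_self _)
  calc ε * (B - (A + R)) ≤ ε * dist x B := mul_le_mul_of_nonneg_left hdist hε.le
    _ ≤ U B := by linarith [hUnonneg x hAx]

theorem tendsto_atTop_of_dispersalOp_neg_integral_le {κ : ℝ} (hJ : LocallyIntegrable J)
    (hJnonneg : ∀ z, 0 ≤ J z) (hJsupp : HasCompactSupport J) (hU : Differentiable ℝ U)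
    (hUnonneg : ∀ᶠ x in atTop, 0 ≤ U x) (hκ : 0 < κ)
    (hop : ∀ᶠ x in atTop, dispersalOp J c (-∫ z, J z) U x ≤ -κ) : Tendsto U atTop atTop := by
  obtain ⟨R, hR, hball⟩ := hJsupp.isCompact.isBounded.subset_closedBall_lt 0 0
  have hJR (z : ℝ) (hz : J z ≠ 0) : |z| ≤ R :=
    mem_closedBall_zero_iff.1 (hball (subset_tsupport J hz))
  obtain ⟨ε, hε, hεκ⟩ : ∃ ε > 0, ((∫ z, J z) * R + |c|) * ε < κ := exists_pos_mul_lt hκ _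
  obtain ⟨A, hA⟩ := eventually_atTop.1 (hUnonneg.and hop)
  have hlinear : Tendsto (fun B => ε * (B - (A + R))) atTop atTop :=
    (tendsto_atTop_add_const_right _ _ tendsto_id).const_mul_atTop hε
  refine tendsto_atTop_mono' _ ?_ hlinear
  filter_upwards [eventually_ge_atTop A] with B hB
  exact mul_sub_le_of_dispersalOp_neg_integral_lt hJ hJnonneg hJsupp hR hJR hU
    (fun x hx => (hA x hx).1) hε (fun x hx => by linarith [(hA x hx).2]) hB

end Supersolution

/-- The exponential tilt `x ↦ f(x) e^{μx}`. Conjugating `dispersalOp` by it removes the decay rate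
`μ`, and the integral of a tilted kernel is the moment generating function of the kernel. -/
def expTilt (μ : ℝ) (f : ℝ → ℝ) (x : ℝ) : ℝ :=
  f x * Real.exp (μ * x)

section ExpTilt

variable {J W : ℝ → ℝ} {μ c a : ℝ}

theorem locallyIntegrable_expTilt (hJ : LocallyIntegrable J) (μ : ℝ) :
    LocallyIntegrable (expTilt μ J) :=
  hJ.mul_continuous (by fun_prop)

theorem hasCompactSupport_expTilt (hJ : HasCompactSupport J) (μ : ℝ) :
    HasCompactSupport (expTilt μ J) :=
  hJ.mul_right

theorem hasDerivAt_expTilt {w' x : ℝ} (hW : HasDerivAt W w' x) (μ : ℝ) :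
    HasDerivAt (expTilt μ W) ((w' + μ * W x) * Real.exp (μ * x)) x := by
  have hexp : HasDerivAt (fun y => Real.exp (μ * y)) (Real.exp (μ * x) * μ) x := by
    simpa using ((hasDerivAt_id x).const_mul μ).exp
  exact (hW.mul hexp).congr_deriv (by ring)

theorem dispersalOp_expTilt {x : ℝ} (hW : DifferentiableAt ℝ W x) :
    dispersalOp (expTilt μ J) c (a - c * μ) (expTilt μ W) x =
      expTilt μ (dispersalOp J c a W) x := by
  have hconv : ∫ y, expTilt μ J (x - y) * expTilt μ W y =
      (∫ y, J (x - y) * W y) * Real.exp (μ * x) := by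
    rw [← integral_mul_const]
    congr with y
    have hexp : Real.exp (μ * x) = Real.exp (μ * (x - y)) * Real.exp (μ * y) := by
      rw [← Real.exp_add]
      ring_nf
    rw [hexp, expTilt, expTilt]
    ring
  rw [dispersalOp, hconv, (hasDerivAt_expTilt hW.hasDerivAt μ).deriv, expTilt, expTilt,
    dispersalOp]
  ring

theorem integral_le_integral_expTilt_of_even (hJnonneg : ∀ x, 0 ≤ J x)
    (hJeven : ∀ x, J (-x) = J x) (hJ : Integrable (expTilt μ J)) :
    ∫ x, J x ≤ ∫ x, expTilt μ J x := by
  have hsymm (x : ℝ) : J x ≤ (expTilt μ J x + expTilt μ J (-x)) / 2 := by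
    calc J x ≤ J x * Real.cosh (μ * x) :=
          le_mul_of_one_le_right (hJnonneg x) (Real.one_le_cosh _)
      _ = (expTilt μ J x + expTilt μ J (-x)) / 2 := by
          rw [Real.cosh_eq, expTilt, expTilt, hJeven, mul_neg]
          ring
  calc ∫ x, J x ≤ ∫ x, (expTilt μ J x + expTilt μ J (-x)) / 2 :=
        integral_mono_of_nonneg (ae_of_all _ hJnonneg) ((hJ.add hJ.comp_neg).div_const 2)
          (ae_of_all _ hsymm)
    _ = ∫ x, expTilt μ J x := by
        rw [integral_div, integral_add hJ hJ.comp_neg, integral_neg_eq_self]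
        ring

theorem exp_neg_isLittleO_of_tendsto_expTilt (hW : Tendsto (expTilt μ W) atTop atTop) :
    (fun x => Real.exp (-(μ * x))) =o[atTop] W := by
  have hone : (fun _ => (1 : ℝ)) =o[atTop] expTilt μ W :=
    isLittleO_const_left.2 (.inr (tendsto_norm_atTop_atTop.comp hW))
  refine ((isBigO_refl (fun x => Real.exp (-(μ * x))) atTop).mul_isLittleO hone).congr
    (fun x => mul_one _) fun x => ?_
  rw [expTilt, mul_left_comm, ← Real.exp_add, neg_add_cancel, Real.exp_zero, mul_one]

theorem tendsto_expTilt_atTop_of_dispersalOp_add_le {J₁ J₂ : ℝ → ℝ} {κ : ℝ}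
    (hJ : LocallyIntegrable J) (hJnonneg : ∀ x, 0 ≤ J x) (hJsupp : HasCompactSupport J)
    (hgap : c * μ < (∫ x, expTilt μ J x) + a) (hW : Differentiable ℝ W) (hWpos : ∀ x, 0 < W x)
    (hJ₁ : Tendsto (fun x => J₁ x / W x) atTop (𝓝 0)) (hκ : 0 < κ)
    (hJ₂ : ∀ᶠ x in atTop, κ * Real.exp (-(μ * x)) ≤ J₂ x)
    (hop : ∀ᶠ x in atTop, dispersalOp J c a W x + (J₁ x + J₂ x) ≤ 0) :
    Tendsto (expTilt μ W) atTop atTop := by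
  set δ := (∫ x, expTilt μ J x) + a - c * μ with hδ
  have hδpos : 0 < δ := sub_pos.2 hgap
  refine tendsto_atTop_of_dispersalOp_neg_integral_le (c := c) (locallyIntegrable_expTilt hJ μ)
    (fun x => mul_nonneg (hJnonneg x) (Real.exp_nonneg _)) (hasCompactSupport_expTilt hJsupp μ)
    (fun x => (hasDerivAt_expTilt (hW x).hasDerivAt μ).differentiableAt)
    (.of_forall fun x => mul_nonneg (hWpos x).le (Real.exp_nonneg _)) hκ ?_
  filter_upwards [hJ₁.eventually_const_lt (neg_neg_of_pos hδpos), hJ₂, hop] with x hJ₁x hJ₂x hopx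
  rw [lt_div_iff₀ (hWpos x)] at hJ₁x
  calc dispersalOp (expTilt μ J) c (-∫ z, expTilt μ J z) (expTilt μ W) x
      = dispersalOp (expTilt μ J) c (a - c * μ + -δ) (expTilt μ W) x := by
        rw [hδ]
        ring_nf
    _ = (dispersalOp J c a W x - δ * W x) * Real.exp (μ * x) := by
        rw [dispersalOp_add, dispersalOp_expTilt (hW x), expTilt, expTilt]
        ring
    _ ≤ -(κ * Real.exp (-(μ * x))) * Real.exp (μ * x) :=
        mul_le_mul_of_nonneg_right (by linarith) (Real.exp_nonneg _)
    _ = -κ := by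
        rw [neg_mul, mul_assoc, ← Real.exp_add, neg_add_cancel, Real.exp_zero, mul_one]

end ExpTilt

theorem c0star_mul_le {J : ℝ → ℝ} (hJ : IsKernel J) {γ₀ l : ℝ} (hγ₀ : 0 ≤ γ₀) (hl : 0 < l) :
    c0star J γ₀ * l ≤ (∫ x, J x * Real.exp (l * x)) - 1 + γ₀ := by
  obtain ⟨hcont, hnonneg, heven, hsupp, hmass⟩ := hJ
  have hmgf (m : ℝ) : 1 ≤ ∫ x, J x * Real.exp (m * x) := by
    rw [← hmass]
    exact integral_le_integral_expTilt_of_even hnonneg heven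
      (integrable_of_locallyIntegrable_of_hasCompactSupport
        (locallyIntegrable_expTilt hcont.locallyIntegrable m) (hasCompactSupport_expTilt hsupp m))
  have hbdd : BddBelow
      ((fun m : ℝ => ((∫ x, J x * Real.exp (m * x)) + γ₀ - 1) / m) '' Ioi 0) :=
    ⟨0, forall_mem_image.2 fun m hm => div_nonneg (by linarith [hmgf m]) (mem_Ioi.1 hm).le⟩
  have hle : c0star J γ₀ ≤ ((∫ x, J x * Real.exp (l * x)) + γ₀ - 1) / l :=
    csInf_le hbdd (mem_image_of_mem _ hl)
  rw [le_div_iff₀ hl] at hle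
  linarith

theorem c0star_mul_lt_of_unique_root {J : ℝ → ℝ} (hJ : IsKernel J) {γ₀ l₀ l : ℝ} (hγ₀ : 0 ≤ γ₀)
    (huniq : ∀ m, 0 < m →
      (∫ x, J x * Real.exp (m * x)) - 1 + γ₀ = c0star J γ₀ * m → m = l₀)
    (hl : 0 < l) (hne : l ≠ l₀) :
    c0star J γ₀ * l < (∫ x, J x * Real.exp (l * x)) - 1 + γ₀ :=
  (c0star_mul_le hJ hγ₀ hl).lt_of_ne fun hroot => hne (huniq l hl hroot.symm)

theorem littleo_of_forcing_nonlocal_general {J W J₁ J₂ : ℝ → ℝ} {μ c γ₀ κ₁ κ₂ : ℝ}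
    (hJ : LocallyIntegrable J) (hJnonneg : ∀ x, 0 ≤ J x) (hJsupp : HasCompactSupport J)
    (hgap : c * μ < (∫ x, J x * Real.exp (μ * x)) - 1 + γ₀)
    (hW : Differentiable ℝ W) (hWpos : ∀ ξ, 0 < W ξ)
    (hop : ∀ᶠ ξ in atTop,
      (∫ y, J (ξ - y) * W y) + c * deriv W ξ + (γ₀ - 1) * W ξ + (J₁ ξ + J₂ ξ) ≤ 0)
    (hJ₁ : Tendsto (fun ξ => J₁ ξ / W ξ) atTop (𝓝 0)) (hκ₂ : 0 < κ₂)
    (hJ₂ : ∀ᶠ ξ in atTop,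
      κ₂ * Real.exp (-(μ * ξ)) ≤ J₂ ξ ∧ J₂ ξ ≤ κ₁ * Real.exp (-(μ * ξ))) :
    Tendsto (fun ξ => J₂ ξ / W ξ) atTop (𝓝 0) ∧
    Tendsto (fun ξ => (J₁ ξ + J₂ ξ) / W ξ) atTop (𝓝 0) := by
  have hgap' : c * μ < (∫ x, expTilt μ J x) + (γ₀ - 1) := by
    simp only [expTilt]
    linarith
  have hexp : (fun ξ => Real.exp (-(μ * ξ))) =o[atTop] W :=
    exp_neg_isLittleO_of_tendsto_expTilt <| tendsto_expTilt_atTop_of_dispersalOp_add_le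
      hJ hJnonneg hJsupp hgap' hW hWpos hJ₁ hκ₂
      (hJ₂.mono fun _ h => h.1) hop
  have hbound : J₂ =O[atTop] fun ξ => Real.exp (-(μ * ξ)) := by
    refine .of_bound κ₁ (hJ₂.mono fun ξ ⟨hlow, hup⟩ => ?_)
    have hJ₂nonneg : 0 ≤ J₂ ξ := le_trans (by positivity) hlow
    rwa [Real.norm_of_nonneg hJ₂nonneg, Real.norm_of_nonneg (Real.exp_nonneg _)]
  have hlim : Tendsto (fun ξ => J₂ ξ / W ξ) atTop (𝓝 0) :=
    (hbound.trans_isLittleO hexp).tendsto_div_nhds_zero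
  exact ⟨hlim, by simpa only [add_div, add_zero] using hJ₁.add hlim⟩

/-- If a bounded positive `C¹` function `Ŵ` solves, for all large `ξ`,
`J∗Ŵ + c₀*Ŵ' + (γ₀-1)Ŵ + 𝒥 = 0` with `𝒥 = 𝒥₁ + 𝒥₂`, `𝒥₁ = o(Ŵ)` and
`κ₂ e^{-2λ₀ξ} ≤ 𝒥₂(ξ) ≤ κ₁ e^{-2λ₀ξ}` for large `ξ`, then `𝒥₂ = o(Ŵ)`
(hence `𝒥 = o(Ŵ)`) as `ξ → +∞`. -/
theorem littleo_of_forcing_nonlocal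
    (J : ℝ → ℝ) (hJ : IsKernel J) (hJne : ∃ x, J x ≠ 0)
    (γ₀ : ℝ) (hγ₀ : 0 < γ₀)
    -- λ₀ is the unique positive number with ∫ J e^{λ₀ x} dx - 1 + γ₀ = c₀* λ₀
    (lam₀ : ℝ) (hlam₀ : 0 < lam₀)
    (hroot : (∫ x, J x * Real.exp (lam₀ * x)) - 1 + γ₀ = c0star J γ₀ * lam₀)
    (huniqroot : ∀ l, 0 < l →
      (∫ x, J x * Real.exp (l * x)) - 1 + γ₀ = c0star J γ₀ * l → l = lam₀)
    (W J1 J2 : ℝ → ℝ)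
    (hW1 : ContDiff ℝ 1 W) (hWpos : ∀ ξ, 0 < W ξ) (hWbdd : ∃ M, ∀ ξ, W ξ ≤ M)
    (hJ1c : Continuous J1) (hJ2c : Continuous J2)
    (heq : ∃ Ξ : ℝ, ∀ ξ, Ξ ≤ ξ →
      (∫ y, J (ξ - y) * W y) + c0star J γ₀ * deriv W ξ + (γ₀ - 1) * W ξ +
        (J1 ξ + J2 ξ) = 0)
    (hJ1o : Tendsto (fun ξ => J1 ξ / W ξ) atTop (nhds 0))
    (κ₁ κ₂ ξb : ℝ) (hκ₂ : 0 < κ₂) (hκ : κ₂ ≤ κ₁)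
    (hJ2b : ∀ ξ, ξb ≤ ξ →
      κ₂ * Real.exp (-(2 * lam₀ * ξ)) ≤ J2 ξ ∧ J2 ξ ≤ κ₁ * Real.exp (-(2 * lam₀ * ξ))) :
    Tendsto (fun ξ => J2 ξ / W ξ) atTop (nhds 0) ∧
    Tendsto (fun ξ => (J1 ξ + J2 ξ) / W ξ) atTop (nhds 0) := by
  exact littleo_of_forcing_nonlocal_general hJ.1.locallyIntegrable hJ.2.1 hJ.2.2.2.1
    (c0star_mul_lt_of_unique_root hJ hγ₀.le huniqroot (by positivity) (by linarith))
    (hW1.differentiable one_ne_zero) hWpos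
    (eventually_atTop.2 <| heq.imp fun _ h ξ hξ => (h ξ hξ).le) hJ1o hκ₂
    (eventually_atTop.2 ⟨ξb, hJ2b⟩)
end
end
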